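/- arXiv:0812.3359 — 3 statements merged into one kernel-verified Lean document; each statement's English description precedes it below -/
import Mathlib

section
/- Let f be an M-map with |f(∅)| < 1, and let f^{*k} denote the k-fold convolution power of f. Then for every subset a ⊆ Ω, the series Σ_{k=1}^∞ (−1)^{k+1} f^{*k}(a)/k converges, with sum equal to log*(1* + f)(a); here (1* + f)(∅) = 1 + f(∅) ≠ 0, log* is defined on nonempty sets by the partition formula, and log*(1* + f)(∅) = Log(1 + f(∅)), the principal complex logarithm. -/
open Finset

/-- The convolution product of M-maps: `(f * g)(a) = ∑_{b ⊆ a} f(b) · g(a \ b)`. -/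
noncomputable def MMap.conv {Ω : Type*} [DecidableEq Ω] (f g : Finset Ω → ℂ) : Finset Ω → ℂ :=
  fun a => ∑ b ∈ a.powerset, f b * g (a \ b)

/-- The cumulant `log* f` on nonempty subsets:
`log* f(a) = ∑_p (|p|−1)!·(−1)^{|p|−1}·(∏_{c ∈ p} f(c))/f(∅)^{|p|}`,
summed over all set partitions `p` of `a`, `|p|` being the number of blocks. -/
noncomputable def MMap.logStar {Ω : Type*} [DecidableEq Ω] (f : Finset Ω → ℂ) :
    Finset Ω → ℂ := fun a =>
  ∑ p : Finpartition a,
    (Nat.factorial (p.parts.card - 1) : ℂ) * (-1 : ℂ) ^ (p.parts.card - 1) *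
      (∏ c ∈ p.parts, f c) / (f ∅) ^ p.parts.card

/-- The M-map `1*`, with `1*(∅) = 1` and `1*(a) = 0` otherwise. -/
noncomputable def MMap.oneStar {Ω : Type*} [DecidableEq Ω] : Finset Ω → ℂ :=
  fun a => if a = ∅ then 1 else 0

/-- The `k`-fold convolution power `f^{*k}`, with `f^{*0} = 1*` and `f^{*1} = f`. -/
noncomputable def MMap.convPow {Ω : Type*} [DecidableEq Ω] (f : Finset Ω → ℂ) :
    ℕ → Finset Ω → ℂ
  | 0 => MMap.oneStar
  | k + 1 => MMap.conv f (MMap.convPow f k)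

/-- The cumulant extended to the empty set by the principal complex logarithm:
`log* f(∅) = Log f(∅)`. -/
noncomputable def MMap.logStarFull {Ω : Type*} [DecidableEq Ω] (f : Finset Ω → ℂ) :
    Finset Ω → ℂ := fun a =>
  if a = ∅ then Complex.log (f ∅) else MMap.logStar f a

/-!
Read an M-map as the generating series `∑ f(a) x^a` with `x_i ^ 2 = 0`, so that
convolution is multiplication. The Euler operator `x_i ∂/∂x_i` restricts an M-map to the sets
containing `i` and is a derivation; hence the powers `f^{*k}` and the sums over set partitions obey
the same first order recursion, and induction on `a` gives Faà di Bruno's formula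
`f^{*k}(a) = ∑_p (d/dz)^{|p|} z^k |_{z = f(∅)} · ∏_{c ∈ p} f(c)`.
Summing against the Taylor coefficients of `Log (1 + z)` turns `z^k` into `Log (1 + z)`, whose
derivatives `(-1)^m m! / (1 + z)^{m + 1}` are the cumulant coefficients.
-/

section Partitions

variable {α : Type*} [DecidableEq α]

theorem finpartition_sup_parts_erase [GeneralizedBooleanAlgebra α] {s t : α} (p : Finpartition s)
    (ht : t ∈ p.parts) : (p.parts.erase t).sup id = s \ t := by
  have disjoint_rest : Disjoint t ((p.parts.erase t).sup id) :=
    supIndep_iff_disjoint_erase.1 p.supIndep t ht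
  have sup_rest : t ⊔ (p.parts.erase t).sup id = s :=
    calc
      t ⊔ (p.parts.erase t).sup id = (insert t (p.parts.erase t)).sup id := by rw [sup_insert, id]
      _ = s := by rw [insert_erase ht, p.sup_parts]
  exact (disjoint_rest.sdiff_eq_of_sup_eq sup_rest).symm

/-- The finpartitions of `s` having `t` as a block, encoded as the finpartitions of the complement
`s \ t`. -/
def finpartitionSDiffEquiv [GeneralizedBooleanAlgebra α] {s t : α} (hts : t ≤ s) (ht : t ≠ ⊥) :
    Finpartition (s \ t) ≃ {p : Finpartition s // t ∈ p.parts} where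
  toFun q := ⟨q.extend ht disjoint_sdiff_self_left (sdiff_sup_cancel hts), mem_insert_self t _⟩
  invFun p := p.1.ofSubset (erase_subset t _) (finpartition_sup_parts_erase p.1 p.2)
  left_inv q := Finpartition.ext <| erase_insert fun h =>
    ht (disjoint_self.1 (disjoint_sdiff_self_right.mono_right (q.le h)))
  right_inv p := Subtype.ext <| Finpartition.ext <| insert_erase p.2

theorem sum_finpartition_eq_sum_block {M : Type*} [AddCommMonoid M] {s : Finset α} {i : α}
    (hi : i ∈ s) (F : Finset (Finset α) → M) :
    ∑ p : Finpartition s, F p.parts =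
      ∑ t ∈ s.powerset with i ∈ t, ∑ q : Finpartition (s \ t), F (insert t q.parts) := by
  have part_mem_blocks : ∀ p ∈ (univ : Finset (Finpartition s)),
      p.part i ∈ s.powerset.filter (i ∈ ·) :=
    fun p _ => mem_filter.2 ⟨mem_powerset.2 (p.part_subset i), p.mem_part hi⟩
  rw [← sum_fiberwise_of_maps_to part_mem_blocks]
  refine sum_congr rfl fun t ht => ?_
  obtain ⟨hts, hit⟩ : t ⊆ s ∧ i ∈ t := by simpa using ht
  have part_eq_iff (p : Finpartition s) : p.part i = t ↔ t ∈ p.parts :=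
    ⟨fun h => h ▸ p.part_mem.2 hi, fun h => p.part_eq_of_mem h hit⟩
  rw [sum_subtype _ (p := fun p : Finpartition s => t ∈ p.parts) (by simp [part_eq_iff])]
  exact (Equiv.sum_comp (finpartitionSDiffEquiv hts (ne_empty_of_mem hit))
    fun p => F p.1.parts).symm

end Partitions

theorem hasSum_descFactorial_mul_geometric {𝕜 : Type*} [NormedDivisionRing 𝕜]
    (m : ℕ) {r : 𝕜} (hr : ‖r‖ < 1) :
    HasSum (fun k : ℕ => (k.descFactorial m : 𝕜) * r ^ (k - m))
      (m.factorial / (1 - r) ^ (m + 1)) := by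
  have initial_eq_zero : ∑ k ∈ range m, (k.descFactorial m : 𝕜) * r ^ (k - m) = 0 :=
    sum_eq_zero fun k hk => by simp [Nat.descFactorial_of_lt (mem_range.1 hk)]
  rw [← hasSum_nat_add_iff' m, initial_eq_zero, sub_zero, div_eq_mul_one_div]
  refine ((hasSum_choose_mul_geometric_of_norm_lt_one m hr).mul_left (m.factorial : 𝕜)).congr_fun
    fun k => ?_
  rw [Nat.add_sub_cancel, Nat.descFactorial_eq_factorial_mul_choose, Nat.cast_mul, mul_assoc]

namespace MMap

/-- The derivatives of `Log (1 + z)`: the `m`-th entry is the `m`-th derivative at `z`. -/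
noncomputable def logOneAddDeriv (z : ℂ) : ℕ → ℂ
  | 0 => Complex.log (1 + z)
  | m + 1 => (-1) ^ m * m.factorial / (1 + z) ^ (m + 1)

-- The term `k = 0` of the series vanishes, because `(-1) / 0 = 0`.
theorem hasSum_logOneAddDeriv {z : ℂ} (hz : ‖z‖ < 1) (m : ℕ) :
    HasSum (fun k : ℕ => (-1) ^ (k + 1) / k * (k.descFactorial m * z ^ (k - m)))
      (logOneAddDeriv z m) := by
  cases m with
  | zero =>
    simpa [logOneAddDeriv, div_mul_eq_mul_div] using Complex.hasSum_taylorSeries_log hz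
  | succ m =>
    have geometric := (hasSum_descFactorial_mul_geometric m (r := -z) (by rwa [norm_neg])).mul_left
      ((-1) ^ m)
    rw [sub_neg_eq_add, ← mul_div_assoc] at geometric
    rw [← hasSum_nat_add_iff' 1]
    simp only [range_one, sum_singleton, Nat.zero_descFactorial_succ, Nat.cast_zero, zero_mul,
      mul_zero, sub_zero]
    refine geometric.congr_fun fun k => ?_
    rw [Nat.succ_descFactorial_succ, Nat.add_sub_add_right]
    rcases lt_or_ge k m with hkm | hmk
    · simp [Nat.descFactorial_of_lt hkm]
    · obtain ⟨d, rfl⟩ := Nat.exists_eq_add_of_le hmk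
      have cast_ne_zero : (m + d + 1 : ℂ) ≠ 0 := mod_cast Nat.succ_ne_zero (m + d)
      rw [Nat.add_sub_cancel_left, neg_pow z]
      push_cast
      field_simp
      ring

variable {Ω : Type*} [DecidableEq Ω]

/-- The Euler operator `x_i ∂/∂x_i` on the generating series of an M-map: it keeps the
coefficients of the sets containing `i` and kills the others. -/
def eulerDeriv (i : Ω) (f : Finset Ω → ℂ) : Finset Ω → ℂ :=
  fun a => if i ∈ a then f a else 0

/-- The Faà di Bruno sum over the set partitions of `a`, in which a partition `p` is weighted by
`w |p|`. -/
noncomputable def partitionSum (f : Finset Ω → ℂ) (w : ℕ → ℂ) : Finset Ω → ℂ :=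
  fun a => ∑ p : Finpartition a, w #p.parts * ∏ c ∈ p.parts, f c

theorem conv_left_comm (f g h : Finset Ω → ℂ) : conv f (conv g h) = conv g (conv f h) := by
  ext a
  simp only [conv, mul_sum]
  rw [sum_comm' (t' := a.powerset) (s' := fun c => (a \ c).powerset)]
  · refine sum_congr rfl fun c _ => sum_congr rfl fun b _ => ?_
    rw [sdiff_right_comm, mul_left_comm]
  · intro b c
    simp only [mem_powerset, subset_sdiff, disjoint_comm (a := b)]
    tauto

theorem conv_zero (f : Finset Ω → ℂ) : conv f 0 = 0 := by
  ext a
  simp [conv]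

theorem conv_smul (r : ℂ) (f g : Finset Ω → ℂ) : conv f (r • g) = r • conv f g := by
  ext a
  simp [conv, mul_sum, mul_left_comm]

theorem eulerDeriv_of_mem {i : Ω} {a : Finset Ω} (hi : i ∈ a) (f : Finset Ω → ℂ) :
    eulerDeriv i f a = f a :=
  if_pos hi

theorem eulerDeriv_conv (i : Ω) (f g : Finset Ω → ℂ) :
    eulerDeriv i (conv f g) = conv (eulerDeriv i f) g + conv f (eulerDeriv i g) := by
  ext a
  simp only [eulerDeriv, conv, Pi.add_apply, ← sum_add_distrib]
  split_ifs with hi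
  · refine sum_congr rfl fun b _ => ?_
    by_cases hb : i ∈ b <;> simp [hi, hb]
  · refine (sum_eq_zero fun b hb => ?_).symm
    have hib : i ∉ b := fun h => hi (mem_powerset.1 hb h)
    simp [hi, hib]

theorem eulerDeriv_oneStar (i : Ω) : eulerDeriv i oneStar = 0 := by
  ext a
  by_cases hi : i ∈ a
  · simp [eulerDeriv, oneStar, ne_empty_of_mem hi]
  · simp [eulerDeriv, hi]

theorem eulerDeriv_convPow_succ (i : Ω) (f : Finset Ω → ℂ) (k : ℕ) :
    eulerDeriv i (convPow f (k + 1)) =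
      ((k : ℂ) + 1) • conv (eulerDeriv i f) (convPow f k) := by
  induction k with
  | zero => simp [convPow, eulerDeriv_conv, eulerDeriv_oneStar, conv_zero]
  | succ k ih =>
    rw [convPow, eulerDeriv_conv, ih, conv_smul, conv_left_comm, ← convPow]
    push_cast
    module

theorem eulerDeriv_partitionSum (i : Ω) (f : Finset Ω → ℂ) (w : ℕ → ℂ) :
    eulerDeriv i (partitionSum f w) =
      conv (eulerDeriv i f) (partitionSum f fun m => w (m + 1)) := by
  ext a
  simp only [eulerDeriv, conv, ite_mul, zero_mul, ← sum_filter]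
  split_ifs with hi
  · simp only [partitionSum]
    rw [sum_finpartition_eq_sum_block hi fun P => w #P * ∏ c ∈ P, f c]
    refine sum_congr rfl fun t ht => ?_
    rw [mul_sum]
    refine sum_congr rfl fun q _ => ?_
    have t_notMem : t ∉ q.parts := fun h =>
      (mem_sdiff.1 (q.subset h (mem_filter.1 ht).2)).2 (mem_filter.1 ht).2
    rw [card_insert_of_notMem t_notMem, prod_insert t_notMem, mul_left_comm]
  · refine (sum_eq_zero fun t ht => ?_).symm
    obtain ⟨hta, hit⟩ := mem_filter.1 ht
    exact absurd (mem_powerset.1 hta hit) hi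

theorem convPow_empty (f : Finset Ω → ℂ) (k : ℕ) : convPow f k ∅ = f ∅ ^ k := by
  induction k with
  | zero => simp [convPow, oneStar]
  | succ k ih => simp [convPow, conv, ih, pow_succ']

theorem partitionSum_empty (f : Finset Ω → ℂ) (w : ℕ → ℂ) : partitionSum f w ∅ = w 0 := by
  change ∑ p : Finpartition (⊥ : Finset Ω), _ = _
  rw [Fintype.sum_unique, Finpartition.default_eq_empty]
  simp [Finpartition.empty]

theorem partitionSum_smul (r : ℂ) (f : Finset Ω → ℂ) (w : ℕ → ℂ) :
    partitionSum f (r • w) = r • partitionSum f w := by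
  ext a
  simp [partitionSum, mul_sum, mul_assoc]

theorem conv_eulerDeriv_congr (i : Ω) (f : Finset Ω → ℂ) {g h : Finset Ω → ℂ} {a : Finset Ω}
    (hgh : ∀ b ⊂ a, g b = h b) : conv (eulerDeriv i f) g a = conv (eulerDeriv i f) h a := by
  refine sum_congr rfl fun t ht => ?_
  by_cases hit : i ∈ t
  · rw [hgh _ (sdiff_ssubset (mem_powerset.1 ht) ⟨i, hit⟩)]
  · simp [eulerDeriv, hit]

theorem convPow_eq_partitionSum (f : Finset Ω → ℂ) (k : ℕ) (a : Finset Ω) :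
    convPow f k a = partitionSum f (fun m => k.descFactorial m * f ∅ ^ (k - m)) a := by
  induction a using Finset.strongInduction generalizing k with
  | H a ih =>
    rcases a.eq_empty_or_nonempty with rfl | ⟨i, hi⟩
    · simp [convPow_empty, partitionSum_empty]
    cases k with
    | zero =>
      have zero_descFactorial (p : Finpartition a) : Nat.descFactorial 0 #p.parts = 0 :=
        Nat.descFactorial_of_lt (card_pos.2 (p.parts_nonempty (ne_empty_of_mem hi)))
      simp [convPow, oneStar, partitionSum, zero_descFactorial, ne_empty_of_mem hi]
    | succ k =>
      have weight_succ :
          (fun m : ℕ => ((k + 1).descFactorial (m + 1) : ℂ) * f ∅ ^ (k + 1 - (m + 1))) =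
            ((k : ℂ) + 1) • fun m => (k.descFactorial m : ℂ) * f ∅ ^ (k - m) := by
        ext m
        rw [Nat.succ_descFactorial_succ, Nat.add_sub_add_right]
        simp [mul_assoc]
      rw [← eulerDeriv_of_mem hi (convPow f (k + 1)), ← eulerDeriv_of_mem hi (partitionSum f _),
        eulerDeriv_convPow_succ, eulerDeriv_partitionSum, weight_succ, partitionSum_smul, conv_smul,
        Pi.smul_apply, Pi.smul_apply, conv_eulerDeriv_congr i f fun b hb => ih b hb k]

-- By `hw`, `w m` is the `m`-th termwise derivative of `∑ c k * z ^ k` at `z = f ∅`.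
theorem hasSum_mul_convPow (f : Finset Ω → ℂ) {c w : ℕ → ℂ} (a : Finset Ω)
    (hw : ∀ m, HasSum (fun k : ℕ => c k * (k.descFactorial m * f ∅ ^ (k - m))) (w m)) :
    HasSum (fun k => c k * convPow f k a) (partitionSum f w a) := by
  refine (hasSum_sum fun p _ => (hw #p.parts).mul_right (∏ b ∈ p.parts, f b)).congr_fun fun k => ?_
  simp only [convPow_eq_partitionSum, partitionSum, mul_sum, mul_assoc]

theorem oneStar_add_empty (f : Finset Ω → ℂ) : (oneStar (Ω := Ω) + f) ∅ = 1 + f ∅ := by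
  simp [oneStar]

theorem logStarFull_oneStar_add (f : Finset Ω → ℂ) (a : Finset Ω) :
    logStarFull (oneStar (Ω := Ω) + f) a = partitionSum f (logOneAddDeriv (f ∅)) a := by
  rcases eq_or_ne a ∅ with rfl | ha
  · rw [logStarFull, if_pos rfl, oneStar_add_empty, partitionSum_empty, logOneAddDeriv]
  · rw [logStarFull, if_neg ha, logStar, partitionSum, oneStar_add_empty]
    refine sum_congr rfl fun p _ => ?_
    have prod_eq : ∏ c ∈ p.parts, (oneStar (Ω := Ω) + f) c = ∏ c ∈ p.parts, f c :=
      prod_congr rfl fun c hc => by simp [oneStar, p.ne_empty hc]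
    obtain ⟨m, hm⟩ := Nat.exists_eq_add_one_of_ne_zero (p.parts_nonempty ha).card_ne_zero
    rw [prod_eq, hm, Nat.add_sub_cancel, logOneAddDeriv]
    ring

end MMap

theorem logStar_power_series_general {Ω : Type*} [DecidableEq Ω] (f : Finset Ω → ℂ)
    (hf : ‖f ∅‖ < 1) (a : Finset Ω) :
    (MMap.oneStar (Ω := Ω) + f) ∅ ≠ 0 ∧
      HasSum (fun k : ℕ => (-1 : ℂ) ^ k * MMap.convPow f (k + 1) a / (k + 1))
        (MMap.logStarFull (MMap.oneStar (Ω := Ω) + f) a) := by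
  constructor
  · rw [MMap.oneStar_add_empty]
    exact Complex.slitPlane_ne_zero (Complex.mem_slitPlane_of_norm_lt_one hf)
  · have log_series : HasSum (fun k : ℕ => (-1) ^ (k + 1) / k * MMap.convPow f k a)
        (MMap.logStarFull (MMap.oneStar (Ω := Ω) + f) a) := by
      rw [MMap.logStarFull_oneStar_add]
      exact MMap.hasSum_mul_convPow f a (MMap.hasSum_logOneAddDeriv hf)
    rw [← hasSum_nat_add_iff' 1] at log_series
    simpa [pow_succ, div_mul_eq_mul_div] using log_series

/-- Power series for the cumulant: if `|f(∅)| < 1` then `(1* + f)(∅) = 1 + f(∅) ≠ 0`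
and, for every subset `a ⊆ Ω`, the series `∑_{k=1}^∞ (−1)^{k+1} f^{*k}(a)/k`
converges with sum `log*(1* + f)(a)`. -/
theorem logStar_power_series {Ω : Type*} [DecidableEq Ω] [Fintype Ω]
    (f : Finset Ω → ℂ) (hf : ‖f ∅‖ < 1) (a : Finset Ω) :
    ((MMap.oneStar (Ω := Ω) + f) ∅) ≠ 0 ∧
    HasSum (fun k : ℕ => (-1 : ℂ) ^ k * MMap.convPow f (k + 1) a / (k + 1))
      (MMap.logStarFull (MMap.oneStar (Ω := Ω) + f) a) :=
  logStar_power_series_general f hf a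
end

section
/- (Duhamel/Dyson integral equation for the matrix exponential.) Let Y and V be d×d complex matrices and let τ ∈ ℝ. Then exp(τ(Y + V)) = exp(τY) + ∫₀^τ exp((τ − s)·Y) · V · exp(s·(Y + V)) ds. -/
open NormedSpace

attribute [local instance] Matrix.normedAddCommGroup Matrix.normedSpace

/-!
The curve `s ↦ exp ((τ - s) • Y) * exp (s • X)` joins `exp (τ • Y)` at `s = 0` to `exp (τ • X)` at
`s = τ`. Each factor commutes with its own generator, so the curve has derivative
`exp ((τ - s) • Y) * (X - Y) * exp (s • X)`, and the fundamental theorem of calculus with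
`X = Y + V` gives the formula in every real Banach algebra. The entrywise sup norm on matrices is
not submultiplicative, but it is equivalent to the `ℓ∞` operator norm, which is, and equivalent
norms define the same Bochner integral.
-/

section BanachAlgebra

variable {𝕂 A : Type*} [RCLike 𝕂] [NormedRing A] [CompleteSpace A]

theorem hasDerivAt_exp_sub_smul_const [NormedAlgebra 𝕂 A] (Y : A) (t s : 𝕂) :
    HasDerivAt (fun s : 𝕂 => exp ((t - s) • Y)) (-(exp ((t - s) • Y) * Y)) s :=
  (hasDerivAt_exp_smul_const Y (t - s)).comp_const_sub t s

theorem hasDerivAt_exp_sub_smul_mul_exp_smul [NormedAlgebra 𝕂 A] (X Y : A) (t s : 𝕂) :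
    HasDerivAt (fun s : 𝕂 => exp ((t - s) • Y) * exp (s • X))
      (exp ((t - s) • Y) * (X - Y) * exp (s • X)) s := by
  refine ((hasDerivAt_exp_sub_smul_const Y t s).mul
    (hasDerivAt_exp_smul_const' X s)).congr_deriv ?_
  noncomm_ring

theorem continuous_exp_sub_smul_mul_mul_exp_smul [NormedAlgebra 𝕂 A] (X Y Z : A) (t : 𝕂) :
    Continuous fun s : 𝕂 => exp ((t - s) • Y) * Z * exp (s • X) := by
  have hY : Continuous fun s : 𝕂 => exp (s • Y) := (differentiable_exp_smul_const 𝕂 Y).continuous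
  have hX : Continuous fun s : 𝕂 => exp (s • X) := (differentiable_exp_smul_const 𝕂 X).continuous
  exact ((hY.comp (continuous_const.sub continuous_id)).mul_const Z).mul hX

theorem integral_exp_sub_smul_mul_sub_mul_exp_smul [NormedAlgebra ℝ A] (X Y : A) (t a b : ℝ) :
    ∫ s in a..b, exp ((t - s) • Y) * (X - Y) * exp (s • X) =
      exp ((t - b) • Y) * exp (b • X) - exp ((t - a) • Y) * exp (a • X) :=
  intervalIntegral.integral_eq_sub_of_hasDerivAt
    (fun s _ => hasDerivAt_exp_sub_smul_mul_exp_smul X Y t s)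
    ((continuous_exp_sub_smul_mul_mul_exp_smul X Y (X - Y) t).intervalIntegrable a b)

theorem duhamel_matrix_exp_general [NormedAlgebra ℝ A] (Y V : A) (τ : ℝ) :
    exp (τ • (Y + V)) =
      exp (τ • Y) + ∫ s in (0 : ℝ)..τ, exp ((τ - s) • Y) * V * exp (s • (Y + V)) := by
  have hFTC := integral_exp_sub_smul_mul_sub_mul_exp_smul (Y + V) Y τ 0 τ
  simp only [add_sub_cancel_left, sub_self, sub_zero, zero_smul, exp_zero, one_mul, mul_one]
    at hFTC
  rw [hFTC, add_sub_cancel]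

end BanachAlgebra

open MeasureTheory in
theorem integral_linftyOp_eq_integral {Ω m n α : Type*} [MeasurableSpace Ω] [Fintype m]
    [Fintype n] [NormedAddCommGroup α] [NormedSpace ℝ α] (μ : Measure Ω) (f : Ω → Matrix m n α) :
    @integral Ω (Matrix m n α) Matrix.linftyOpNormedAddCommGroup Matrix.linftyOpNormedSpace _ μ f =
      ∫ ω, f ω ∂μ :=
  -- The two norms induce definitionally equal topologies, so `refl` is an equivalence between them.
  @ContinuousLinearEquiv.integral_comp_comm Ω (Matrix m n α) (Matrix m n α) _ μ ℝ _ _ _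
    Matrix.linftyOpNormedAddCommGroup Matrix.linftyOpNormedSpace Matrix.linftyOpNormedSpace _
    (.refl ℝ _) f

/-- Duhamel/Dyson integral equation for the matrix exponential: for `d×d` complex
matrices `Y`, `V` and `τ ∈ ℝ`,
`exp(τ(Y + V)) = exp(τY) + ∫₀^τ exp((τ − s)Y) · V · exp(s(Y + V)) ds`. -/
theorem duhamel_matrix_exp (d : ℕ) (Y V : Matrix (Fin d) (Fin d) ℂ) (τ : ℝ) :
    exp (τ • (Y + V)) =
      exp (τ • Y) +
        ∫ s in (0 : ℝ)..τ, exp ((τ - s) • Y) * V * exp (s • (Y + V)) := by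
  simp only [intervalIntegral, ← integral_linftyOp_eq_integral]
  exact @duhamel_matrix_exp_general (Matrix (Fin d) (Fin d) ℂ) Matrix.linftyOpNormedRing
    inferInstance Matrix.linftyOpNormedAlgebra Y V τ
end

section
/- (Dyson lemma.) Let Y, X_1, …, X_n be d×d complex matrices, let τ > 0, and let 1 ≤ k ≤ n. Then the mixed partial derivative ∂^k/∂γ_1⋯∂γ_k of the map γ ↦ exp(τ(Y + Σ_{j=1}^n γ_j X_j)), evaluated at γ = 0, equals Σ_{π ∈ S_k} ∫_{0 ≤ t_1 ≤ t_2 ≤ ⋯ ≤ t_k ≤ τ} e^{(τ − t_k)Y} X_{π(k)} e^{(t_k − t_{k−1})Y} X_{π(k−1)} ⋯ e^{(t_2 − t_1)Y} X_{π(1)} e^{t_1 Y} dt_1 ⋯ dt_k, where the sum runs over all permutations π of {1,…,k} and the integral is over the simplex {t ∈ ℝ^k : 0 ≤ t_1 ≤ ⋯ ≤ t_k ≤ τ}. -/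
open Finset NormedSpace MeasureTheory

attribute [local instance] Matrix.normedAddCommGroup Matrix.normedSpace

/-- The mixed partial derivative `∂_a h(x)` of `h : ℝⁿ → E` with respect to the
(distinct) coordinates indexed by the finite set `a = {a_1 < ⋯ < a_k}`, defined by
feeding the corresponding standard basis vectors to the `k`-th iterated Fréchet
derivative.  For smooth `h` this is the usual mixed partial derivative,
independent of the order of differentiation, and `∂_∅ h(x) = h(x)`. -/
noncomputable def mixedPartial {n : ℕ} {E : Type*} [NormedAddCommGroup E]
    [NormedSpace ℝ E] (h : (Fin n → ℝ) → E) (a : Finset (Fin n)) (x : Fin n → ℝ) : E :=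
  iteratedFDeriv ℝ a.card h x (fun i => Pi.single (a.orderEmbOfFin rfl i) 1)

/- Let `E(t) = exp (tY)`. Duhamel's formula
`exp (t(Y + w)) = E(t) + ∫₀ᵗ E(t - s) w exp (s(Y + w)) ds` can be substituted into itself, and for
small `w` the iteration converges to the power series of `w ↦ exp (t(Y + w))` at `0`, whose `k`-th
term is a `k`-fold iterated integral, multilinear in the `k` insertions of `w`. The `k`-th
derivative of a power series is its `k`-th term summed over all permutations of the arguments, and
by Fubini the iterated integral is an integral over the simplex of ordered times. -/

section DysonSeries

variable {A : Type*} [NormedRing A] [NormedAlgebra ℝ A] {k : ℕ}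

/-- The multilinear map `w ↦ a * w_k * q (w_0, …, w_{k-1})`: one more interaction `w_k`, followed
by the free propagator `a`, is put to the left of the `k` interactions in `q`. -/
noncomputable def mulLastMul (a : A) (q : A [×k]→L[ℝ] A) : A [×(k + 1)]→L[ℝ] A :=
  (continuousMultilinearCurryRightEquiv' ℝ k A A).symm
    ((ContinuousLinearMap.mulLeftRight ℝ A a).compContinuousMultilinearMap q)

theorem mulLastMul_apply (a : A) (q : A [×k]→L[ℝ] A) (w : Fin (k + 1) → A) :
    mulLastMul a q w = a * w (Fin.last k) * q (Fin.init w) := by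
  simp [mulLastMul]

theorem norm_mulLastMul_le (a : A) (q : A [×k]→L[ℝ] A) : ‖mulLastMul a q‖ ≤ ‖a‖ * ‖q‖ := by
  rw [mulLastMul, LinearIsometryEquiv.norm_map]
  exact (ContinuousLinearMap.norm_compContinuousMultilinearMap_le _ _).trans
    (by gcongr; exact ContinuousLinearMap.opNorm_mulLeftRight_apply_le ℝ A a)

@[fun_prop]
theorem continuous_mulLastMul {Z : Type*} [TopologicalSpace Z] {a : Z → A}
    {q : Z → A [×k]→L[ℝ] A} (ha : Continuous a) (hq : Continuous q) :
    Continuous fun z => mulLastMul (a z) (q z) :=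
  (continuousMultilinearCurryRightEquiv' ℝ k A A).symm.continuous.comp <|
    isBoundedBilinearMap_compMultilinear.continuous.comp
      (((ContinuousLinearMap.mulLeftRight ℝ A).continuous.comp ha).prodMk hq)

theorem norm_integral_le_mul_of_norm_le {E : Type*} [NormedAddCommGroup E] [NormedSpace ℝ E]
    {f : ℝ → E} {B T t : ℝ} (ht : t ∈ Set.Icc 0 T) (hf : ∀ s ∈ Set.Icc 0 t, ‖f s‖ ≤ B) :
    ‖∫ s in (0 : ℝ)..t, f s‖ ≤ B * T := by
  have hB : 0 ≤ B := (norm_nonneg _).trans (hf 0 ⟨le_rfl, ht.1⟩)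
  calc
    ‖∫ s in (0 : ℝ)..t, f s‖ ≤ B * |t - 0| :=
      intervalIntegral.norm_integral_le_of_norm_le_const fun s hs =>
        hf s (Set.Ioc_subset_Icc_self (Set.uIoc_of_le ht.1 ▸ hs))
    _ = B * t := by rw [sub_zero, abs_of_nonneg ht.1]
    _ ≤ B * T := by gcongr; exact ht.2

/-- The `k`-th term of the Dyson series as a multilinear map in the `k` perturbations inserted
into the free evolution `exp (τ • Y)`, with the last argument acting at the latest time. -/
noncomputable def dysonTerm (Y : A) : (k : ℕ) → ℝ → A [×k]→L[ℝ] A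
  | 0, τ => ContinuousMultilinearMap.constOfIsEmpty ℝ _ (exp (τ • Y))
  | k + 1, τ => ∫ s in (0 : ℝ)..τ, mulLastMul (exp ((τ - s) • Y)) (dysonTerm Y k s)

theorem dysonTerm_zero_apply (Y : A) (τ : ℝ) (w : Fin 0 → A) : dysonTerm Y 0 τ w = exp (τ • Y) :=
  rfl

theorem norm_dysonTerm_le (Y : A) (k : ℕ) {C T t : ℝ}
    (hC : ∀ r ∈ Set.Icc 0 T, ‖exp (r • Y)‖ ≤ C) (ht : t ∈ Set.Icc 0 T) :
    ‖dysonTerm Y k t‖ ≤ C * (C * T) ^ k := by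
  have hC0 : 0 ≤ C := (norm_nonneg _).trans (hC t ht)
  induction k generalizing t with
  | zero => simpa [dysonTerm] using hC t ht
  | succ k ih =>
    calc
      ‖dysonTerm Y (k + 1) t‖ ≤ C * (C * (C * T) ^ k) * T := by
        refine norm_integral_le_mul_of_norm_le ht fun s hs => (norm_mulLastMul_le _ _).trans ?_
        gcongr
        · exact hC _ ⟨sub_nonneg.2 hs.2, by linarith [hs.1, ht.2]⟩
        · exact ih ⟨hs.1, hs.2.trans ht.2⟩
      _ = C * (C * T) ^ (k + 1) := by ring

/-- The Dyson series: the expansion of `exp (τ • (Y + w))` in powers of the perturbation `w`. -/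
noncomputable def dysonSeries (Y : A) (τ : ℝ) : FormalMultilinearSeries ℝ A A :=
  fun k => dysonTerm Y k τ

theorem le_radius_dysonSeries (Y : A) {C τ : ℝ} {r : NNReal} (hτ : 0 ≤ τ)
    (hC : ∀ s ∈ Set.Icc 0 τ, ‖exp (s • Y)‖ ≤ C) (hr : C * τ * r ≤ 1) :
    r ≤ (dysonSeries Y τ).radius := by
  have hC0 : 0 ≤ C := (norm_nonneg _).trans (hC τ ⟨hτ, le_rfl⟩)
  refine FormalMultilinearSeries.le_radius_of_bound _ C fun k => ?_
  calc
    ‖dysonTerm Y k τ‖ * (r : ℝ) ^ k ≤ C * (C * τ) ^ k * (r : ℝ) ^ k := by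
      gcongr; exact norm_dysonTerm_le Y k hC ⟨hτ, le_rfl⟩
    _ = C * (C * τ * r) ^ k := by ring
    _ ≤ C := mul_le_of_le_one_right hC0 (pow_le_one₀ (by positivity) hr)

variable [CompleteSpace A]

@[fun_prop]
theorem contDiff_exp {n : WithTop ℕ∞} : ContDiff ℝ n (exp : A → A) :=
  AnalyticOnNhd.contDiff fun x _ => exp_analytic (𝕂 := ℝ) x

@[fun_prop]
theorem continuous_exp : Continuous (exp : A → A) :=
  (contDiff_exp (n := 0)).continuous

theorem exists_norm_exp_smul_le (Y : A) (T : ℝ) :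
    ∃ C, ∀ r ∈ Set.Icc 0 T, ‖exp (r • Y)‖ ≤ C :=
  isCompact_Icc.exists_bound_of_continuousOn (by fun_prop)

theorem exp_smul_add_eq_add_integral (Y w : A) (t : ℝ) :
    exp (t • (Y + w)) =
      exp (t • Y) + ∫ s in (0 : ℝ)..t, exp ((t - s) • Y) * w * exp (s • (Y + w)) := by
  have hderiv (s : ℝ) : HasDerivAt (fun s : ℝ => exp ((t - s) • Y) * exp (s • (Y + w)))
      (exp ((t - s) • Y) * w * exp (s • (Y + w))) s := by
    have hleft := (hasDerivAt_exp_smul_const (𝕂 := ℝ) Y (t - s)).scomp s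
      ((hasDerivAt_id s).const_sub t)
    have hright := hasDerivAt_exp_smul_const' (𝕂 := ℝ) (Y + w) s
    convert! hleft.mul hright using 1
    simp [mul_add, add_mul, mul_assoc]
  rw [intervalIntegral.integral_eq_sub_of_hasDerivAt (fun s _ => hderiv s)
    (Continuous.intervalIntegrable (by fun_prop) 0 t)]
  simp

@[fun_prop]
theorem continuous_dysonTerm (Y : A) (k : ℕ) : Continuous (dysonTerm Y k) := by
  induction k with
  | zero =>
    have hexp : Continuous fun τ : ℝ => exp (τ • Y) := by fun_prop
    exact (continuousMultilinearCurryFin0 ℝ A A).symm.continuous.comp hexp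
  | succ k ih =>
    exact intervalIntegral.continuous_parametric_intervalIntegral_of_continuous
      (f := fun τ s => mulLastMul (exp ((τ - s) • Y)) (dysonTerm Y k s)) (by
        simp only [Function.uncurry_def]; fun_prop) continuous_id

theorem dysonTerm_succ_apply (Y : A) (k : ℕ) (τ : ℝ) (w : Fin (k + 1) → A) :
    dysonTerm Y (k + 1) τ w =
      ∫ s in (0 : ℝ)..τ, exp ((τ - s) • Y) * w (Fin.last k) * dysonTerm Y k s (Fin.init w) := by
  have hint : IntervalIntegrable (fun s => mulLastMul (exp ((τ - s) • Y)) (dysonTerm Y k s))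
      volume 0 τ := Continuous.intervalIntegrable (by fun_prop) 0 τ
  simpa only [ContinuousMultilinearMap.apply_apply, mulLastMul_apply, dysonTerm] using
    ((ContinuousMultilinearMap.apply ℝ (fun _ : Fin (k + 1) => A) A w).intervalIntegral_comp_comm
      hint).symm

theorem exp_sub_partialSum_dysonSeries_succ (Y w : A) (N : ℕ) (t : ℝ) :
    exp (t • (Y + w)) - (dysonSeries Y t).partialSum (N + 1) w =
      ∫ s in (0 : ℝ)..t, exp ((t - s) • Y) * w *
        (exp (s • (Y + w)) - (dysonSeries Y s).partialSum N w) := by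
  have hexp : IntervalIntegrable (fun s : ℝ => exp ((t - s) • Y) * w * exp (s • (Y + w)))
      volume 0 t := Continuous.intervalIntegrable (by fun_prop) 0 t
  have hint (k : ℕ) : IntervalIntegrable
      (fun s : ℝ => exp ((t - s) • Y) * w * dysonTerm Y k s fun _ => w) volume 0 t :=
    Continuous.intervalIntegrable (by fun_prop) 0 t
  have hsum : IntervalIntegrable (fun s : ℝ => ∑ k ∈ Finset.range N,
      exp ((t - s) • Y) * w * dysonTerm Y k s fun _ => w) volume 0 t :=
    Continuous.intervalIntegrable (by fun_prop) 0 t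
  simp only [FormalMultilinearSeries.partialSum, dysonSeries, mul_sub, Finset.mul_sum]
  rw [intervalIntegral.integral_sub hexp hsum,
    intervalIntegral.integral_finsetSum fun k _ => hint k, Finset.sum_range_succ',
    exp_smul_add_eq_add_integral Y w t]
  simp only [dysonTerm_zero_apply, dysonTerm_succ_apply, Fin.init_def]
  abel

theorem norm_exp_sub_partialSum_dysonSeries_le (Y w : A) (N : ℕ) {C M T t : ℝ}
    (hC : ∀ r ∈ Set.Icc 0 T, ‖exp (r • Y)‖ ≤ C)
    (hM : ∀ r ∈ Set.Icc 0 T, ‖exp (r • (Y + w))‖ ≤ M) (ht : t ∈ Set.Icc 0 T) :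
    ‖exp (t • (Y + w)) - (dysonSeries Y t).partialSum N w‖ ≤ M * (C * T * ‖w‖) ^ N := by
  have hC0 : 0 ≤ C := (norm_nonneg _).trans (hC t ht)
  induction N generalizing t with
  | zero => simpa [FormalMultilinearSeries.partialSum] using hM t ht
  | succ N ih =>
    rw [exp_sub_partialSum_dysonSeries_succ]
    calc
      _ ≤ C * ‖w‖ * (M * (C * T * ‖w‖) ^ N) * T := by
        refine norm_integral_le_mul_of_norm_le ht fun s hs => norm_mul₃_le.trans ?_
        gcongr
        · exact hC _ ⟨sub_nonneg.2 hs.2, by linarith [hs.1, ht.2]⟩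
        · exact ih ⟨hs.1, hs.2.trans ht.2⟩
      _ = M * (C * T * ‖w‖) ^ (N + 1) := by ring

theorem tendsto_partialSum_dysonSeries (Y w : A) {C τ : ℝ} (hτ : 0 ≤ τ)
    (hC : ∀ s ∈ Set.Icc 0 τ, ‖exp (s • Y)‖ ≤ C) (hw : C * τ * ‖w‖ < 1) :
    Filter.Tendsto (fun N => (dysonSeries Y τ).partialSum N w) Filter.atTop
      (nhds (exp (τ • (Y + w)))) := by
  have hτ' : τ ∈ Set.Icc 0 τ := ⟨hτ, le_rfl⟩
  have hC0 : 0 ≤ C := (norm_nonneg _).trans (hC τ hτ')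
  obtain ⟨M, hM⟩ := exists_norm_exp_smul_le (Y + w) τ
  have hgeom : Filter.Tendsto (fun N => M * (C * τ * ‖w‖) ^ N) Filter.atTop (nhds 0) := by
    simpa using (tendsto_pow_atTop_nhds_zero_of_lt_one (by positivity) hw).const_mul M
  refine tendsto_iff_norm_sub_tendsto_zero.2 (squeeze_zero (fun _ => norm_nonneg _) ?_ hgeom)
  intro N
  rw [norm_sub_rev]
  exact norm_exp_sub_partialSum_dysonSeries_le Y w N hC hM hτ'

theorem hasFPowerSeriesAt_exp_smul_add (Y : A) {τ : ℝ} (hτ : 0 ≤ τ) :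
    HasFPowerSeriesAt (fun w : A => exp (τ • (Y + w))) (dysonSeries Y τ) 0 := by
  obtain ⟨C, hC⟩ := exists_norm_exp_smul_le Y τ
  have hC0 : 0 ≤ C := (norm_nonneg _).trans (hC τ ⟨hτ, le_rfl⟩)
  obtain ⟨r, hr0, hr⟩ := exists_pos_mul_lt one_pos (C * τ)
  lift r to NNReal using hr0.le
  have hradius := le_radius_dysonSeries Y hτ hC hr.le
  refine ⟨r, hradius, by exact_mod_cast hr0, fun {w} hw => ?_⟩
  have hwr : ‖w‖ < r := by simpa [Metric.eball_coe] using hw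
  have hsum := (dysonSeries Y τ).summable (Metric.eball_subset_eball hradius hw)
  rw [hsum.hasSum_iff_tendsto_nat, zero_add]
  exact tendsto_partialSum_dysonSeries Y w hτ hC (lt_of_le_of_lt (by gcongr) hr)

end DysonSeries

section TimeOrdering

/-- The simplex `{0 ≤ t_0 ≤ ⋯ ≤ t_{k-1} ≤ τ}` of ordered times. -/
def timeSimplex (k : ℕ) (τ : ℝ) : Set (Fin k → ℝ) :=
  {t | Monotone t ∧ ∀ i, t i ∈ Set.Icc 0 τ}

theorem isCompact_timeSimplex (k : ℕ) (τ : ℝ) : IsCompact (timeSimplex k τ) := by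
  have hcube : IsCompact {t : Fin k → ℝ | ∀ i, t i ∈ Set.Icc 0 τ} :=
    isCompact_pi_infinite fun _ => isCompact_Icc
  exact hcube.inter_left isClosed_monotone

theorem timeSimplex_zero (τ : ℝ) : timeSimplex 0 τ = Set.univ := by
  ext t
  simp [timeSimplex, Subsingleton.monotone]

theorem snoc_mem_timeSimplex {k : ℕ} {τ s : ℝ} {u : Fin k → ℝ} :
    (Fin.snoc u s : Fin (k + 1) → ℝ) ∈ timeSimplex (k + 1) τ ↔
      s ∈ Set.Icc 0 τ ∧ u ∈ timeSimplex k s := by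
  simp only [timeSimplex, Set.mem_ofPred_eq, Monotone, Fin.forall_fin_succ', Fin.snoc_castSucc,
    Fin.snoc_last, Set.mem_Icc]
  constructor
  · grind
  · rintro ⟨hs, hu, hus⟩
    exact ⟨⟨fun i => ⟨fun _ h => hu (Fin.castSucc_le_castSucc_iff.1 h), fun _ => (hus i).2⟩,
      fun i h => absurd h (Fin.castSucc_lt_last i).not_ge, fun _ => le_rfl⟩,
      fun i => ⟨(hus i).1, (hus i).2.trans hs.2⟩, hs⟩

theorem setIntegral_timeSimplex_succ {E : Type*} [NormedAddCommGroup E] [NormedSpace ℝ E]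
    {k : ℕ} {τ : ℝ} (hτ : 0 ≤ τ) {f : (Fin (k + 1) → ℝ) → E}
    (hf : IntegrableOn f (timeSimplex (k + 1) τ)) :
    ∫ t in timeSimplex (k + 1) τ, f t =
      ∫ s in (0 : ℝ)..τ, ∫ u in timeSimplex k s, f (Fin.snoc u s) := by
  classical
  let split := MeasurableEquiv.piFinSuccAbove (fun _ : Fin (k + 1) => ℝ) (Fin.last k)
  have hsplit : MeasurePreserving split.symm (volume.prod volume) volume :=
    (volume_preserving_piFinSuccAbove (fun _ : Fin (k + 1) => ℝ) (Fin.last k)).symm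
  have hsnoc (s : ℝ) (u : Fin k → ℝ) : split.symm (s, u) = Fin.snoc u s :=
    Fin.insertNth_last' s u
  have hmeas (j : ℕ) (σ : ℝ) : MeasurableSet (timeSimplex j σ) :=
    (isCompact_timeSimplex j σ).measurableSet
  have hint : Integrable (fun p => (timeSimplex (k + 1) τ).indicator f (split.symm p))
      (volume.prod volume) :=
    hsplit.integrable_comp_of_integrable (hf.integrable_indicator (hmeas _ _))
  rw [← integral_indicator (hmeas _ _), ← hsplit.integral_comp', integral_prod _ hint,
    intervalIntegral.integral_of_le hτ, ← integral_Icc_eq_integral_Ioc,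
    ← integral_indicator measurableSet_Icc]
  congr 1 with s
  by_cases hs : s ∈ Set.Icc 0 τ
  · rw [Set.indicator_of_mem hs, ← integral_indicator (hmeas _ _)]
    congr 1 with u
    simp only [hsnoc, Set.indicator_apply, snoc_mem_timeSimplex, hs, true_and]
  · simp [hsnoc, snoc_mem_timeSimplex, hs]

/-- The integrand `e^{(τ - t_{k-1})Y} w_{k-1} e^{(t_{k-1} - t_{k-2})Y} ⋯ w_0 e^{t_0 Y}` of the
Dyson series, peeling off the latest time first. -/
noncomputable def timeOrderedProd {A : Type*} [Ring A] [Module ℝ A] [TopologicalSpace A]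
    [IsTopologicalRing A] (Y : A) : (k : ℕ) → (Fin k → A) → ℝ → (Fin k → ℝ) → A
  | 0, _, τ, _ => exp (τ • Y)
  | k + 1, w, τ, t => exp ((τ - t (Fin.last k)) • Y) * w (Fin.last k) *
      timeOrderedProd Y k (Fin.init w) (t (Fin.last k)) (Fin.init t)

theorem timeOrderedProd_succ_eq_list_prod {A : Type*} [Ring A] [Module ℝ A] [TopologicalSpace A]
    [IsTopologicalRing A] (Y : A) (m : ℕ) (w : Fin (m + 1) → A) (τ : ℝ) (t : Fin (m + 1) → ℝ) :
    timeOrderedProd Y (m + 1) w τ t = exp ((τ - t (Fin.last m)) • Y) *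
      (List.ofFn fun i : Fin (m + 1) => w i *
        exp ((t i - if (i : ℕ) = 0 then 0 else t ⟨i - 1, by have := i.isLt; omega⟩) •
          Y)).reverse.prod := by
  induction m generalizing τ with
  | zero => simp [timeOrderedProd, mul_assoc]
  | succ m ih =>
    rw [List.ofFn_succ', List.concat_eq_append, List.reverse_append, List.prod_append,
      List.reverse_singleton, List.prod_singleton, timeOrderedProd, ih, mul_assoc, mul_assoc]
    rfl

variable {A : Type*} [NormedRing A] [NormedAlgebra ℝ A] [CompleteSpace A] {k : ℕ}

theorem continuous_timeOrderedProd (Y : A) (w : Fin k → A) :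
    Continuous fun p : ℝ × (Fin k → ℝ) => timeOrderedProd Y k w p.1 p.2 := by
  induction k with
  | zero => simp only [timeOrderedProd]; fun_prop
  | succ k ih =>
    have hsplit : Continuous fun p : ℝ × (Fin (k + 1) → ℝ) =>
        (p.2 (Fin.last k), fun i : Fin k => p.2 i.castSucc) := by fun_prop
    have hinit : Continuous fun p : ℝ × (Fin (k + 1) → ℝ) =>
        timeOrderedProd Y k (Fin.init w) (p.2 (Fin.last k)) (Fin.init p.2) :=
      (ih (Fin.init w)).comp hsplit
    simp only [timeOrderedProd]
    fun_prop

theorem integrableOn_timeOrderedProd (Y : A) (w : Fin k → A) (τ σ : ℝ) :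
    IntegrableOn (timeOrderedProd Y k w τ) (timeSimplex k σ) :=
  ((continuous_timeOrderedProd Y w).comp
    (Continuous.prodMk_right τ)).continuousOn.integrableOn_compact (isCompact_timeSimplex k σ)

theorem dysonTerm_apply_eq_setIntegral (Y : A) {τ : ℝ} (hτ : 0 ≤ τ) (w : Fin k → A) :
    dysonTerm Y k τ w = ∫ t in timeSimplex k τ, timeOrderedProd Y k w τ t := by
  induction k generalizing τ with
  | zero => simp [dysonTerm_zero_apply, timeOrderedProd, timeSimplex_zero, volume_pi, Measure.real]
  | succ k ih =>
    rw [dysonTerm_succ_apply, setIntegral_timeSimplex_succ hτ (integrableOn_timeOrderedProd ..)]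
    refine intervalIntegral.integral_congr fun s hs => ?_
    rw [Set.uIcc_of_le hτ] at hs
    simp only [timeOrderedProd, Fin.snoc_last, Fin.init_snoc, ih hs.1]
    exact (integral_const_mul_of_integrable (integrableOn_timeOrderedProd Y _ s s)).symm

theorem iteratedFDeriv_exp_smul_add_zero (Y : A) {τ : ℝ} (hτ : 0 ≤ τ) (v : Fin k → A) :
    iteratedFDeriv ℝ k (fun w : A => exp (τ • (Y + w))) 0 v =
      ∑ π : Equiv.Perm (Fin k),
        ∫ t in timeSimplex k τ, timeOrderedProd Y k (fun i => v (π i)) τ t := by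
  obtain ⟨r, hr⟩ := hasFPowerSeriesAt_exp_smul_add Y hτ
  simp only [hr.iteratedFDeriv_eq_sum_of_completeSpace, dysonSeries,
    dysonTerm_apply_eq_setIntegral Y hτ]

/-- The sup norm on matrices is not submultiplicative; the map `L` carries the formula from a
Banach algebra norm over to it. -/
theorem dyson_lemma_general {E : Type*} [NormedAddCommGroup E] [NormedSpace ℝ E] [CompleteSpace E]
    (L : A →L[ℝ] E) {n : ℕ} (a : Finset (Fin n)) (ha : a.card = k) (Y : A) (X : Fin n → A) {τ : ℝ}
    (hτ : 0 ≤ τ) :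
    mixedPartial (fun γ : Fin n → ℝ => L (exp (τ • (Y + ∑ j, γ j • X j)))) a 0 =
      ∑ π : Equiv.Perm (Fin k), ∫ t in timeSimplex k τ,
        L (timeOrderedProd Y k (fun i => X (a.orderEmbOfFin ha (π i))) τ t) := by
  subst ha
  let ℓ : (Fin n → ℝ) →L[ℝ] A := (Fintype.linearCombination ℝ X).toContinuousLinearMap
  have hsingle (j : Fin n) : ℓ (Pi.single j 1) = X j := by
    simp [ℓ, Fintype.linearCombination_apply_single]
  have hsmooth : ContDiff ℝ ⊤ fun w : A => exp (τ • (Y + w)) := by fun_prop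
  calc
    _ = L (iteratedFDeriv ℝ a.card (fun w : A => exp (τ • (Y + w))) 0
          fun i => X (a.orderEmbOfFin rfl i)) := by
      change iteratedFDeriv ℝ a.card (L ∘ (fun w : A => exp (τ • (Y + w))) ∘ ℓ) 0 _ = _
      rw [L.iteratedFDeriv_comp_left (hsmooth.comp ℓ.contDiff).contDiffAt le_top,
        ℓ.iteratedFDeriv_comp_right hsmooth 0 le_top]
      simp [hsingle]
    _ = _ := by
      rw [iteratedFDeriv_exp_smul_add_zero Y hτ, map_sum]
      exact Finset.sum_congr rfl fun π _ =>
        (L.integral_comp_comm (integrableOn_timeOrderedProd ..)).symm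

end TimeOrdering

theorem orderEmbOfFin_filter_val_lt {n k : ℕ} (hkn : k ≤ n)
    (h : (Finset.univ.filter fun j : Fin n => (j : ℕ) < k).card = k) :
    ⇑((Finset.univ.filter fun j : Fin n => (j : ℕ) < k).orderEmbOfFin h) = Fin.castLE hkn :=
  (Finset.orderEmbOfFin_unique h (by simp) (Fin.strictMono_castLE hkn)).symm

/-- Dyson lemma: for `d×d` complex matrices `Y, X_1, …, X_n`, `τ > 0` and
`1 ≤ k ≤ n`, the mixed partial derivative `∂^k/∂γ_1⋯∂γ_k` of
`γ ↦ exp(τ(Y + ∑_j γ_j X_j))` at `γ = 0` equals the sum over all permutations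
`π` of `{1,…,k}` of the integral over the simplex `0 ≤ t_1 ≤ ⋯ ≤ t_k ≤ τ` of
`e^{(τ−t_k)Y} X_{π(k)} e^{(t_k−t_{k−1})Y} ⋯ e^{(t_2−t_1)Y} X_{π(1)} e^{t_1 Y}`. -/
theorem dyson_lemma (d n k : ℕ) (hk : 1 ≤ k) (hkn : k ≤ n)
    (Y : Matrix (Fin d) (Fin d) ℂ) (X : Fin n → Matrix (Fin d) (Fin d) ℂ)
    (τ : ℝ) (hτ : 0 < τ) :
    mixedPartial (fun γ : Fin n → ℝ => exp (τ • (Y + ∑ j, γ j • X j)))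
        (Finset.univ.filter (fun j : Fin n => (j : ℕ) < k)) 0 =
      ∑ π : Equiv.Perm (Fin k),
        ∫ t in {t : Fin k → ℝ | Monotone t ∧ ∀ i, t i ∈ Set.Icc 0 τ},
          exp ((τ - t ⟨k - 1, by omega⟩) • Y) *
            (List.ofFn (fun i : Fin k =>
              X (Fin.castLE hkn (π i)) *
                exp ((t i - if (i : ℕ) = 0 then 0
                  else t ⟨(i : ℕ) - 1, by have := i.isLt; omega⟩) • Y))).reverse.prod := by
  obtain ⟨m, rfl⟩ : ∃ m, k = m + 1 := ⟨k - 1, by omega⟩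
  have hcard : (Finset.univ.filter fun j : Fin n => (j : ℕ) < m + 1).card = m + 1 := by
    rw [Fin.card_filter_val_lt, min_eq_right hkn]
  -- The two norms on matrices have definitionally the same topology, so `L` can be the identity.
  have h := @dyson_lemma_general (Matrix (Fin d) (Fin d) ℂ) Matrix.linftyOpNormedRing
    Matrix.linftyOpNormedAlgebra inferInstance (m + 1) (Matrix (Fin d) (Fin d) ℂ)
    Matrix.normedAddCommGroup Matrix.normedSpace inferInstance (.id ℝ _) n _ hcard Y X τ hτ.le
  simp only [timeOrderedProd_succ_eq_list_prod, orderEmbOfFin_filter_val_lt hkn] at h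
  exact h
end
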